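/- (Sobolev–Troisi inequality, case p̄ = n.) Let E ⊂ ℝⁿ be a bounded open set, let p_i ≥ 1 for i = 1,…,n, set 1/p̄ = (1/n) Σ_{i=1}^n (1/p_i), and assume p̄ = n. Then for every 1 ≤ r < ∞ there exists a constant γ₁ > 0 depending only on n, r, p₁,…,pₙ (and E) such that for every u ∈ C_c^∞(E): ‖u‖_{L^r(E)} ≤ γ₁ [ Σ_{i=1}^n ‖∂_i u‖_{L^{p_i}(E)} + ‖u‖_{L^1(E)} ]. -/

import Mathlib

open MeasureTheory

open Function (support update)
open scoped ENNReal

/-!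
Let `w = ‖v‖^r / ∫ ‖v‖^r`, a probability density, and `θᵢ = 1 - 1/pᵢ`, so that `∑ θᵢ = n - 1`.
The fundamental theorem of calculus for `‖v‖^(1 + r θᵢ)` along a line in direction `i` gives
`‖v‖ w^θᵢ ≤ (1 + r θᵢ) ∫ w^θᵢ ‖∂ᵢv‖ dxᵢ`. Multiply the `(n-1)`-th roots of these `n` inequalities:
the left side is exactly `‖v‖^(n/(n-1)) w`, the integral of the right side is controlled by the
Gagliardo–Loomis–Whitney grid-lines inequality, and Hölder bounds `∫ w^θᵢ ‖∂ᵢv‖` by `‖∂ᵢv‖_pᵢ`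
because `∫ w = 1`. Hence `∫ ‖v‖^(n/(n-1)) w ≤ ((1 + r) ∑ ‖∂ᵢv‖_pᵢ)^(n/(n-1))`, and Hölder on the
support of `v` turns this gain of integrability over `L^r` into
`‖v‖_r ≤ (1 + r) |supp v|^(1/r) ∑ ‖∂ᵢv‖_pᵢ`. For `n = 1` the last bound is the fundamental theorem
of calculus.
-/

section LebesgueIntegral

variable {α ι : Type*} [MeasurableSpace α] {μ : Measure α}

lemma ennreal_rpow_sum_of_nonneg (a : ℝ≥0∞) {s : Finset ι} {e : ι → ℝ}
    (he : ∀ i ∈ s, 0 ≤ e i) : a ^ ∑ i ∈ s, e i = ∏ i ∈ s, a ^ e i := by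
  induction s using Finset.cons_induction with
  | empty => simp
  | cons i s hi ih =>
    rw [Finset.forall_mem_cons] at he
    rw [Finset.sum_cons, Finset.prod_cons,
      ENNReal.rpow_add_of_nonneg _ _ he.1 (Finset.sum_nonneg he.2), ih he.2]

lemma ennreal_rpow_mul_eq_prod_of_sum_eq [Fintype ι] [Nontrivial ι] {θ : ι → ℝ}
    (hθ : ∀ i, 0 ≤ θ i) (hsum : ∑ i, θ i = Fintype.card ι - 1) (a b : ℝ≥0∞) :
    a ^ (Fintype.card ι / (Fintype.card ι - 1) : ℝ) * b =
      ∏ i, (a * b ^ θ i) ^ (1 / (Fintype.card ι - 1 : ℝ)) := by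
  have hcard : (0 : ℝ) < Fintype.card ι - 1 := sub_pos.2 (mod_cast Fintype.one_lt_card)
  rw [ENNReal.prod_rpow_of_nonneg (by positivity), Finset.prod_mul_distrib, Finset.prod_const,
    ← ennreal_rpow_sum_of_nonneg _ fun i _ => hθ i, hsum,
    ENNReal.mul_rpow_of_nonneg _ _ (by positivity), ← ENNReal.rpow_natCast, ← ENNReal.rpow_mul,
    ← ENNReal.rpow_mul, mul_one_div_cancel hcard.ne', ENNReal.rpow_one, mul_one_div,
    Finset.card_univ]

lemma eLpNorm_ofReal_eq_lintegral {F : Type*} [NormedAddCommGroup F] {q : ℝ} (hq : 0 < q)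
    (g : α → F) (μ : Measure α) :
    eLpNorm g (.ofReal q) μ = (∫⁻ x, ‖g x‖ₑ ^ q ∂μ) ^ (1 / q) := by
  rw [eLpNorm_eq_lintegral_rpow_enorm_toReal (by simpa using hq) ENNReal.ofReal_ne_top,
    ENNReal.toReal_ofReal hq.le]

lemma lintegral_rpow_one_sub_inv_mul_enorm_le {F : Type*} [NormedAddCommGroup F]
    {w : α → ℝ≥0∞} (hw : AEMeasurable w μ) {g : α → F} (hg : AEStronglyMeasurable g μ)
    {p : ℝ} (hp : 1 ≤ p) :
    ∫⁻ x, w x ^ (1 - p⁻¹) * ‖g x‖ₑ ∂μ ≤ (∫⁻ x, w x ∂μ) ^ (1 - p⁻¹) * eLpNorm g (.ofReal p) μ := by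
  have hp0 : 0 < p := by positivity
  have hθ : 0 ≤ 1 - p⁻¹ := sub_nonneg.2 (inv_le_one_of_one_le₀ hp)
  rw [eLpNorm_ofReal_eq_lintegral hp0, one_div]
  simpa only [ENNReal.rpow_rpow_inv hp0.ne'] using
    ENNReal.lintegral_mul_norm_pow_le hw (hg.enorm.pow_const p) hθ
      (inv_nonneg.2 hp0.le) (sub_add_cancel 1 p⁻¹)

lemma lintegral_rpow_le_mul_measure_support {f : α → ℝ≥0∞} (hf : Measurable f) {r m : ℝ}
    (hr : 0 < r) (hm : 0 < m) :
    (∫⁻ x, f x ^ r ∂μ) ^ (1 + r / m) ≤ (∫⁻ x, f x ^ (m + r) ∂μ) ^ (r / m) * μ (support f) := by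
  have hmr : 0 < m + r := by positivity
  have hsupp {q : ℝ} (hq : 0 < q) : ∫⁻ x in support f, f x ^ q ∂μ = ∫⁻ x, f x ^ q ∂μ :=
    setLIntegral_eq_of_support_subset fun x hx h0 => hx (by simp [h0, hq])
  have holder : ∫⁻ x, f x ^ r ∂μ ≤
      (∫⁻ x, f x ^ (m + r) ∂μ) ^ (r / (m + r)) * μ (support f) ^ (m / (m + r)) := by
    have := ENNReal.lintegral_mul_norm_pow_le (μ := μ.restrict (support f)) (g := fun _ => 1)
      (hf.pow_const (m + r)).aemeasurable aemeasurable_const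
      (p := r / (m + r)) (q := m / (m + r)) (by positivity) (by positivity) (by field_simp; ring)
    simpa only [← ENNReal.rpow_mul, mul_div_cancel₀ r hmr.ne', ENNReal.one_rpow, mul_one,
      hsupp hr, hsupp hmr, lintegral_one, Measure.restrict_apply_univ] using this
  calc (∫⁻ x, f x ^ r ∂μ) ^ (1 + r / m)
    _ ≤ ((∫⁻ x, f x ^ (m + r) ∂μ) ^ (r / (m + r)) * μ (support f) ^ (m / (m + r)))
          ^ (1 + r / m) := by gcongr
    _ = (∫⁻ x, f x ^ (m + r) ∂μ) ^ (r / m) * μ (support f) := by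
      rw [ENNReal.mul_rpow_of_nonneg _ _ (by positivity), ← ENNReal.rpow_mul, ← ENNReal.rpow_mul,
        show r / (m + r) * (1 + r / m) = r / m by field_simp,
        show m / (m + r) * (1 + r / m) = 1 by field_simp, ENNReal.rpow_one]

lemma lintegral_rpow_rpow_inv_le_of_lintegral_rpow_add_le {f : α → ℝ≥0∞} (hf : Measurable f)
    {r m : ℝ} (hr : 0 < r) (hm : 0 < m) (hfin : ∫⁻ x, f x ^ r ∂μ ≠ ∞) {Y : ℝ≥0∞}
    (hgain : ∫⁻ x, f x ^ (m + r) ∂μ ≤ (∫⁻ x, f x ^ r ∂μ) * Y ^ m) :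
    (∫⁻ x, f x ^ r ∂μ) ^ (1 / r) ≤ Y * μ (support f) ^ (1 / r) := by
  set J := ∫⁻ x, f x ^ r ∂μ
  rcases eq_or_ne J 0 with hJ0 | hJ0
  · simp [hJ0, hr]
  have hinterp : J ^ (1 + r / m) ≤ J ^ (r / m) * (Y ^ r * μ (support f)) := by
    calc J ^ (1 + r / m)
      _ ≤ (∫⁻ x, f x ^ (m + r) ∂μ) ^ (r / m) * μ (support f) :=
        lintegral_rpow_le_mul_measure_support hf hr hm
      _ ≤ (J * Y ^ m) ^ (r / m) * μ (support f) := by gcongr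
      _ = J ^ (r / m) * (Y ^ r * μ (support f)) := by
        rw [ENNReal.mul_rpow_of_nonneg _ _ (by positivity), ← ENNReal.rpow_mul,
          mul_div_cancel₀ _ hm.ne', mul_assoc]
  have hJle : J ≤ Y ^ r * μ (support f) := by
    rwa [add_comm, ENNReal.rpow_add _ _ hJ0 hfin, ENNReal.rpow_one, ENNReal.mul_le_mul_iff_right
      (by simp [hJ0, hfin]) (by finiteness)] at hinterp
  calc J ^ (1 / r)
    _ ≤ (Y ^ r * μ (support f)) ^ (1 / r) := by gcongr
    _ = Y * μ (support f) ^ (1 / r) := by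
      rw [ENNReal.mul_rpow_of_nonneg _ _ (by positivity), ← ENNReal.rpow_mul,
        mul_one_div_cancel hr.ne', ENNReal.rpow_one]

lemma lintegral_prod_lintegral_rpow_le_sum_lintegral [Fintype ι] [Nontrivial ι] [DecidableEq ι]
    {A : ι → Type*} [∀ i, MeasurableSpace (A i)] (ν : ∀ i, Measure (A i)) [∀ i, SigmaFinite (ν i)]
    {f : ι → (∀ i, A i) → ℝ≥0∞} (hf : ∀ i, Measurable (f i)) :
    ∫⁻ x, ∏ i, (∫⁻ t, f i (update x i t) ∂ν i) ^ (1 / (Fintype.card ι - 1 : ℝ)) ∂.pi ν ≤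
      (∑ i, ∫⁻ x, f i x ∂.pi ν) ^ (Fintype.card ι / (Fintype.card ι - 1) : ℝ) := by
  have hcard : (1 : ℝ) < Fintype.card ι := mod_cast Fintype.one_lt_card
  have hexp : (0 : ℝ) ≤ 1 / (Fintype.card ι - 1) := one_div_nonneg.2 (sub_pos.2 hcard).le
  have hconj : Real.HolderConjugate (Fintype.card ι) (Fintype.card ι / (Fintype.card ι - 1)) :=
    .conjExponent hcard
  have hsum : Measurable fun x => ∑ i, f i x := Finset.measurable_fun_sum _ fun i _ => hf i
  rw [← lintegral_finsetSum _ fun i _ => hf i]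
  refine (lintegral_mono fun x => ?_).trans (lintegral_prod_lintegral_pow_le ν hconj hsum)
  refine Finset.prod_le_prod' fun i _ => ENNReal.rpow_le_rpow (lintegral_mono fun t => ?_) hexp
  exact Finset.single_le_sum (f := fun j => f j (update x i t)) (fun _ _ => zero_le)
    (Finset.mem_univ i)

lemma lintegral_update_default [Fintype ι] [Unique ι] [DecidableEq ι] {A : ι → Type*}
    [∀ i, MeasurableSpace (A i)] (ν : ∀ i, Measure (A i)) [∀ i, SigmaFinite (ν i)]
    (f : (∀ i, A i) → ℝ≥0∞) (x : ∀ i, A i) :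
    ∫⁻ t, f (update x default t) ∂ν default = ∫⁻ y, f y ∂.pi ν := by
  have h := congrFun (lmarginal_singleton (μ := ν) f default) x
  rwa [← Finset.univ_unique, lmarginal_univ, eq_comm] at h

end LebesgueIntegral

section PartialDerivatives

variable {ι F : Type*} [Fintype ι] [DecidableEq ι] [NormedAddCommGroup F] [InnerProductSpace ℝ F]

lemma enorm_rpow_le_lintegral_enorm_deriv {g : ℝ → F} (hg : ContDiff ℝ 1 g)
    (h2g : HasCompactSupport g) {s : ℝ} (hs : 1 ≤ s) (t : ℝ) :
    ‖g t‖ₑ ^ s ≤ ∫⁻ τ, .ofReal s * ‖g τ‖ₑ ^ (s - 1) * ‖deriv g τ‖ₑ := by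
  rcases hs.eq_or_lt with rfl | hs
  · simpa using (h2g.enorm_le_lintegral_Ici_deriv hg t).trans (setLIntegral_le_lintegral _ _)
  lift s to NNReal using by positivity
  have hpow : HasCompactSupport fun τ => ‖g τ‖ ^ (s : ℝ) :=
    h2g.comp_left (g := fun y => ‖y‖ ^ (s : ℝ)) (by simp [(zero_lt_one.trans hs).ne'])
  calc ‖g t‖ₑ ^ (s : ℝ)
    _ = ‖‖g t‖ ^ (s : ℝ)‖ₑ := by
      rw [Real.enorm_rpow_of_nonneg (norm_nonneg _) s.coe_nonneg, enorm_norm]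
    _ ≤ ∫⁻ τ, ‖deriv (fun τ => ‖g τ‖ ^ (s : ℝ)) τ‖ₑ :=
      (hpow.enorm_le_lintegral_Ici_deriv (hg.norm_rpow hs) t).trans (setLIntegral_le_lintegral _ _)
    _ ≤ ∫⁻ τ, .ofReal s * ‖g τ‖ₑ ^ ((s : ℝ) - 1) * ‖deriv g τ‖ₑ := by
      gcongr with τ
      simpa only [← ofReal_norm, norm_deriv_eq_norm_fderiv, ENNReal.ofReal_coe_nnreal] using
        enorm_fderiv_norm_rpow_le (hg.differentiable one_ne_zero) (x := τ) (NNReal.coe_lt_coe.1 hs)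

lemma enorm_rpow_le_lintegral_enorm_partialDeriv {v : (ι → ℝ) → F} (hv : ContDiff ℝ 1 v)
    (h2v : HasCompactSupport v) {s : ℝ} (hs : 1 ≤ s) (i : ι) (x : ι → ℝ) :
    ‖v x‖ₑ ^ s ≤ ∫⁻ t, .ofReal s * ‖v (update x i t)‖ₑ ^ (s - 1) *
      ‖fderiv ℝ v (update x i t) (Pi.single i 1)‖ₑ := by
  have hline : ContDiff ℝ 1 (update x i) := by convert! contDiff_update 1 x i
  have hderiv (t : ℝ) : deriv (v ∘ update x i) t =
      fderiv ℝ v (update x i t) (Pi.single i 1) := by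
    rw [fderiv_comp_deriv _ (hv.differentiable one_ne_zero).differentiableAt
      (hasDerivAt_update x i t).differentiableAt, deriv_update]
  simpa only [Function.comp_apply, Function.update_eq_self, hderiv] using
    enorm_rpow_le_lintegral_enorm_deriv (hv.comp hline)
      (h2v.comp_isClosedEmbedding (isClosedEmbedding_update x i)) hs (x i)

lemma enorm_mul_rpow_le_lintegral_enorm_partialDeriv {v : (ι → ℝ) → F} (hv : ContDiff ℝ 1 v)
    (h2v : HasCompactSupport v) {r θ : ℝ} (hr : 0 ≤ r) (hθ : 0 ≤ θ) (c : ℝ≥0∞) (i : ι)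
    (x : ι → ℝ) :
    ‖v x‖ₑ * (c * ‖v x‖ₑ ^ r) ^ θ ≤ ∫⁻ t, .ofReal (1 + r * θ) *
      ((c * ‖v (update x i t)‖ₑ ^ r) ^ θ * ‖fderiv ℝ v (update x i t) (Pi.single i 1)‖ₑ) := by
  have hrθ : 0 ≤ r * θ := mul_nonneg hr hθ
  have hweight (y : ι → ℝ) : (c * ‖v y‖ₑ ^ r) ^ θ = c ^ θ * ‖v y‖ₑ ^ (r * θ) := by
    rw [ENNReal.mul_rpow_of_nonneg _ _ hθ, ← ENNReal.rpow_mul]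
  have hline := enorm_rpow_le_lintegral_enorm_partialDeriv hv h2v (le_add_of_nonneg_right hrθ) i x
  calc ‖v x‖ₑ * (c * ‖v x‖ₑ ^ r) ^ θ
    _ = c ^ θ * ‖v x‖ₑ ^ (1 + r * θ) := by
      rw [hweight, ENNReal.rpow_add_of_nonneg _ _ zero_le_one hrθ, ENNReal.rpow_one]
      ring
    _ ≤ ∫⁻ t, c ^ θ * (.ofReal (1 + r * θ) * ‖v (update x i t)‖ₑ ^ (1 + r * θ - 1) *
          ‖fderiv ℝ v (update x i t) (Pi.single i 1)‖ₑ) :=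
      (mul_le_mul_right hline _).trans (lintegral_const_mul_le _ _)
    _ = _ := by
      simp only [hweight, add_sub_cancel_left]
      congr! 2 with t
      ring

lemma lintegral_enorm_rpow_mul_weight_le [Nontrivial ι] {p : ι → ℝ} (hp : ∀ i, 1 ≤ p i)
    (hsum : ∑ i, (p i)⁻¹ = 1) {r : ℝ} (hr : 0 ≤ r) {v : (ι → ℝ) → F} (hv : ContDiff ℝ 1 v)
    (h2v : HasCompactSupport v) {c : ℝ≥0∞} (hc : ∫⁻ x, c * ‖v x‖ₑ ^ r = 1) :
    ∫⁻ x, ‖v x‖ₑ ^ (Fintype.card ι / (Fintype.card ι - 1) : ℝ) * (c * ‖v x‖ₑ ^ r) ≤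
      (.ofReal (1 + r) *
        ∑ i, eLpNorm (fun x => fderiv ℝ v x (Pi.single i 1)) (.ofReal (p i)) volume)
          ^ (Fintype.card ι / (Fintype.card ι - 1) : ℝ) := by
  have hcard : (0 : ℝ) < Fintype.card ι - 1 := sub_pos.2 (mod_cast Fintype.one_lt_card)
  set w : (ι → ℝ) → ℝ≥0∞ := fun x => c * ‖v x‖ₑ ^ r
  set θ : ι → ℝ := fun i => 1 - (p i)⁻¹ with hθ
  have hθ0 (i : ι) : 0 ≤ θ i := sub_nonneg.2 (inv_le_one_of_one_le₀ (hp i))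
  have hθ1 (i : ι) : θ i ≤ 1 := sub_le_self _ (inv_nonneg.2 (zero_le_one.trans (hp i)))
  have hθsum : ∑ i, θ i = Fintype.card ι - 1 := by simp [hθ, hsum]
  have hwm : Measurable w := (hv.continuous.enorm.measurable.pow_const r).const_mul c
  have hdc (i : ι) : Continuous fun x => fderiv ℝ v x (Pi.single i 1) :=
    (hv.continuous_fderiv one_ne_zero).clm_apply continuous_const
  have hfm (i : ι) : Measurable fun x => w x ^ θ i * ‖fderiv ℝ v x (Pi.single i 1)‖ₑ :=
    (hwm.pow_const _).mul (hdc i).enorm.measurable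
  have hHolder (i : ι) :
      ∫⁻ x, .ofReal (1 + r * θ i) * (w x ^ θ i * ‖fderiv ℝ v x (Pi.single i 1)‖ₑ) ≤
        .ofReal (1 + r) *
          eLpNorm (fun x => fderiv ℝ v x (Pi.single i 1)) (.ofReal (p i)) volume := by
    rw [lintegral_const_mul _ (hfm i)]
    gcongr
    · exact mul_le_of_le_one_right hr (hθ1 i)
    · simpa only [hc, ENNReal.one_rpow, one_mul] using
        lintegral_rpow_one_sub_inv_mul_enorm_le (μ := volume) hwm.aemeasurable
          (hdc i).aestronglyMeasurable (hp i)
  calc ∫⁻ x, ‖v x‖ₑ ^ (Fintype.card ι / (Fintype.card ι - 1) : ℝ) * w x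
    _ ≤ ∫⁻ x, ∏ i, (∫⁻ t, .ofReal (1 + r * θ i) * (w (update x i t) ^ θ i *
          ‖fderiv ℝ v (update x i t) (Pi.single i 1)‖ₑ)) ^ (1 / (Fintype.card ι - 1 : ℝ)) := by
      simp only [ennreal_rpow_mul_eq_prod_of_sum_eq hθ0 hθsum]
      gcongr with x i _
      exact enorm_mul_rpow_le_lintegral_enorm_partialDeriv hv h2v hr (hθ0 i) c i x
    _ ≤ (∑ i, ∫⁻ x, .ofReal (1 + r * θ i) * (w x ^ θ i * ‖fderiv ℝ v x (Pi.single i 1)‖ₑ))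
          ^ (Fintype.card ι / (Fintype.card ι - 1) : ℝ) :=
      lintegral_prod_lintegral_rpow_le_sum_lintegral (fun _ => volume) fun i => (hfm i).const_mul _
    _ ≤ _ := by
      rw [Finset.mul_sum]
      gcongr with i
      exact hHolder i

lemma eLpNorm_le_sum_eLpNorm_partialDeriv_of_nontrivial [Nontrivial ι] {p : ι → ℝ}
    (hp : ∀ i, 1 ≤ p i) (hsum : ∑ i, (p i)⁻¹ = 1) {r : ℝ} (hr : 0 < r) {v : (ι → ℝ) → F}
    (hv : ContDiff ℝ 1 v) (h2v : HasCompactSupport v) :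
    eLpNorm v (.ofReal r) volume ≤ .ofReal (1 + r) * volume (support v) ^ (1 / r) *
      ∑ i, eLpNorm (fun x => fderiv ℝ v x (Pi.single i 1)) (.ofReal (p i)) volume := by
  set Y := ENNReal.ofReal (1 + r) *
    ∑ i, eLpNorm (fun x => fderiv ℝ v x (Pi.single i 1)) (.ofReal (p i)) volume with hY
  set m : ℝ := Fintype.card ι / (Fintype.card ι - 1)
  set J := ∫⁻ x, ‖v x‖ₑ ^ r
  have hm0 : 0 < m :=
    div_pos (mod_cast Fintype.card_pos) (sub_pos.2 (mod_cast Fintype.one_lt_card))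
  have hnorm : eLpNorm v (.ofReal r) volume = J ^ (1 / r) := eLpNorm_ofReal_eq_lintegral hr v _
  rcases eq_or_ne J 0 with hJ0 | hJ0
  · simp [hnorm, hJ0, hr]
  have hJtop : J ≠ ∞ := fun h => (hv.continuous.memLp_of_hasCompactSupport h2v).eLpNorm_ne_top <| by
    rw [hnorm, h, ENNReal.top_rpow_of_pos (by positivity)]
  have hvm : Measurable fun x => ‖v x‖ₑ := hv.continuous.enorm.measurable
  have hweight : ∫⁻ x, J⁻¹ * ‖v x‖ₑ ^ r = 1 := by
    rw [lintegral_const_mul _ (hvm.pow_const r), ENNReal.inv_mul_cancel hJ0 hJtop]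
  have hgain : ∫⁻ x, ‖v x‖ₑ ^ (m + r) ≤ J * Y ^ m := by
    rw [← ENNReal.inv_mul_le_iff hJ0 hJtop, ← lintegral_const_mul _ (hvm.pow_const _)]
    refine (lintegral_congr fun x => ?_).trans_le
      (lintegral_enorm_rpow_mul_weight_le hp hsum hr.le hv h2v hweight)
    rw [ENNReal.rpow_add_of_nonneg _ _ hm0.le hr.le]
    ring
  calc eLpNorm v (.ofReal r) volume
    _ ≤ Y * volume (support fun x => ‖v x‖ₑ) ^ (1 / r) :=
      hnorm.trans_le (lintegral_rpow_rpow_inv_le_of_lintegral_rpow_add_le hvm hr hm0 hJtop hgain)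
    _ = _ := by
      simp only [hY, support, ne_eq, enorm_eq_zero]
      ring

lemma eLpNorm_le_eLpNorm_partialDeriv_of_unique [Unique ι] {v : (ι → ℝ) → F} (q : ℝ≥0∞)
    (hv : ContDiff ℝ 1 v) (h2v : HasCompactSupport v) :
    eLpNorm v q volume ≤ volume (support v) ^ q.toReal⁻¹ *
      eLpNorm (fun x => fderiv ℝ v x (Pi.single default 1)) 1 volume := by
  have hbound (x : ι → ℝ) :
      ‖v x‖ₑ ≤ eLpNorm (fun x => fderiv ℝ v x (Pi.single default 1)) 1 volume := by
    simpa [volume_pi, eLpNorm_one_eq_lintegral_enorm,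
      lintegral_update_default (fun _ => volume) fun y => ‖fderiv ℝ v y (Pi.single default 1)‖ₑ]
      using enorm_rpow_le_lintegral_enorm_partialDeriv hv h2v le_rfl default x
  rw [← eLpNorm_restrict_eq_of_support_subset (subset_refl (support v)), mul_comm]
  simpa only [Measure.restrict_apply_univ, smul_eq_mul] using
    eLpNorm_le_of_ae_enorm_bound (μ := volume.restrict (support v)) (.of_forall hbound)

theorem eLpNorm_le_sum_eLpNorm_partialDeriv {p : ι → ℝ} (hp : ∀ i, 0 < p i)
    (hsum : ∑ i, (p i)⁻¹ = 1) {r : ℝ} (hr : 0 < r) {v : (ι → ℝ) → F} (hv : ContDiff ℝ 1 v)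
    (h2v : HasCompactSupport v) :
    eLpNorm v (.ofReal r) volume ≤ .ofReal (1 + r) * volume (support v) ^ (1 / r) *
      ∑ i, eLpNorm (fun x => fderiv ℝ v x (Pi.single i 1)) (.ofReal (p i)) volume := by
  have hp1 (i : ι) : 1 ≤ p i := (inv_le_one₀ (hp i)).1 <| hsum ▸
    Finset.single_le_sum (fun j _ => (inv_pos.2 (hp j)).le) (Finset.mem_univ i)
  rcases isEmpty_or_nonempty ι with _ | _
  · simp at hsum
  rcases subsingleton_or_nontrivial ι with _ | _
  · obtain ⟨_⟩ := nonempty_unique ι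
    have hp_one : p default = 1 := by simpa using hsum
    have hone : 1 ≤ ENNReal.ofReal (1 + r) := by simpa using hr.le
    simpa [hp_one, ENNReal.toReal_ofReal hr.le, mul_assoc] using
      (eLpNorm_le_eLpNorm_partialDeriv_of_unique (.ofReal r) hv h2v).trans
        (le_mul_of_one_le_left' hone)
  · exact eLpNorm_le_sum_eLpNorm_partialDeriv_of_nontrivial hp1 hsum hr hv h2v

end PartialDerivatives

section EuclideanSpace

variable {ι F : Type*} [NormedAddCommGroup F]

lemma eLpNorm_comp_toLp [Fintype ι] (g : EuclideanSpace ℝ ι → F) (q : ℝ≥0∞) :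
    eLpNorm (fun y => g (WithLp.toLp 2 y)) q volume = eLpNorm g q volume := by
  rw [← (PiLp.volume_preserving_toLp ι).map_eq]
  exact ((MeasurableEquiv.toLp 2 (ι → ℝ)).measurableEmbedding.eLpNorm_map_measure).symm

lemma fderiv_comp_toLp_single [NormedSpace ℝ F] [Finite ι] [DecidableEq ι]
    (u : EuclideanSpace ℝ ι → F) (i : ι) (y : ι → ℝ) :
    fderiv ℝ (fun y => u (WithLp.toLp 2 y)) y (Pi.single i 1) =
      fderiv ℝ u (WithLp.toLp 2 y) (EuclideanSpace.single i 1) := by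
  cases nonempty_fintype ι
  exact DFunLike.congr_fun
    ((PiLp.continuousLinearEquiv 2 ℝ fun _ : ι => ℝ).symm.comp_right_fderiv (f := u) (x := y))
    (Pi.single i 1)

theorem eLpNorm_le_sum_eLpNorm_fderiv_single [Fintype ι] [DecidableEq ι]
    [InnerProductSpace ℝ F] {p : ι → ℝ} (hp : ∀ i, 0 < p i) (hsum : ∑ i, (p i)⁻¹ = 1)
    {r : ℝ} (hr : 0 < r) {u : EuclideanSpace ℝ ι → F} (hu : ContDiff ℝ 1 u)
    (h2u : HasCompactSupport u) :
    eLpNorm u (.ofReal r) volume ≤ .ofReal (1 + r) * volume (support u) ^ (1 / r) *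
      ∑ i, eLpNorm (fun x => fderiv ℝ u x (EuclideanSpace.single i 1)) (.ofReal (p i)) volume := by
  let L := (PiLp.continuousLinearEquiv 2 ℝ fun _ : ι => ℝ).symm
  have hsupp : volume (support fun y : ι → ℝ => u (WithLp.toLp 2 y)) = volume (support u) :=
    (PiLp.volume_preserving_toLp ι).measure_preimage_equiv
      (f := MeasurableEquiv.toLp 2 (ι → ℝ)) (support u)
  have hpartial (i : ι) :
      eLpNorm (fun y => fderiv ℝ (fun y => u (WithLp.toLp 2 y)) y (Pi.single i 1))
        (.ofReal (p i)) volume =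
      eLpNorm (fun x => fderiv ℝ u x (EuclideanSpace.single i 1)) (.ofReal (p i)) volume := by
    simp only [fderiv_comp_toLp_single]
    exact eLpNorm_comp_toLp (fun x => fderiv ℝ u x (EuclideanSpace.single i 1)) _
  simpa only [hsupp, hpartial, eLpNorm_comp_toLp] using
    eLpNorm_le_sum_eLpNorm_partialDeriv hp hsum hr (v := fun y => u (WithLp.toLp 2 y))
      (hu.comp L.contDiff) (h2u.comp_homeomorph L.toHomeomorph)

lemma toReal_eLpNorm_eq_setIntegral {α : Type*} [MeasurableSpace α] {μ : Measure α} {g : α → F}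
    (hg : AEStronglyMeasurable g μ) {E : Set α} (hE : support g ⊆ E) {q : ℝ} (hq : 0 < q) :
    (eLpNorm g (.ofReal q) μ).toReal = (∫ x in E, ‖g x‖ ^ q ∂μ) ^ (1 / q) := by
  rw [← eLpNorm_restrict_eq_of_support_subset hE, toReal_eLpNorm hg.restrict,
    lpNorm_eq_integral_norm_rpow_toReal (by simpa using hq) ENNReal.ofReal_ne_top hg.restrict,
    ENNReal.toReal_ofReal hq.le, one_div]

theorem sobolev_troisi_critical_general [Fintype ι] [DecidableEq ι]
    [InnerProductSpace ℝ F] {p : ι → ℝ} (hp : ∀ i, 0 < p i) (hsum : ∑ i, (p i)⁻¹ = 1)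
    {E : Set (EuclideanSpace ℝ ι)} (hE : volume E ≠ ∞) {r : ℝ} (hr : 0 < r)
    {u : EuclideanSpace ℝ ι → F} (hu : ContDiff ℝ 1 u) (h2u : HasCompactSupport u)
    (huE : tsupport u ⊆ E) :
    (∫ x in E, ‖u x‖ ^ r) ^ (1 / r) ≤ (1 + r) * volume.real E ^ (1 / r) *
      ∑ i, (∫ x in E, ‖fderiv ℝ u x (EuclideanSpace.single i 1)‖ ^ p i) ^ (1 / p i) := by
  let D (i : ι) (x : EuclideanSpace ℝ ι) : F := fderiv ℝ u x (EuclideanSpace.single i 1)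
  have hDcont (i : ι) : Continuous (D i) :=
    (hu.continuous_fderiv one_ne_zero).clm_apply continuous_const
  have hDsupp (i : ι) : support (D i) ⊆ E := fun x hx =>
    huE (tsupport_fderiv_subset ℝ (subset_tsupport _ fun h => hx (by simp [D, h])))
  have hDtop (i : ι) : eLpNorm (D i) (.ofReal (p i)) volume ≠ ∞ :=
    ((hDcont i).memLp_of_hasCompactSupport (h2u.fderiv_apply (𝕜 := ℝ) _)).eLpNorm_ne_top
  have hDsum : ∑ i, eLpNorm (D i) (.ofReal (p i)) volume ≠ ∞ :=
    ENNReal.sum_ne_top.2 fun i _ => hDtop i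
  have hle : eLpNorm u (.ofReal r) volume ≤ .ofReal (1 + r) * volume E ^ (1 / r) *
      ∑ i, eLpNorm (D i) (.ofReal (p i)) volume :=
    (eLpNorm_le_sum_eLpNorm_fderiv_single hp hsum hr hu h2u).trans <| by
      gcongr
      exact (subset_tsupport u).trans huE
  calc (∫ x in E, ‖u x‖ ^ r) ^ (1 / r)
    _ = (eLpNorm u (.ofReal r) volume).toReal :=
      (toReal_eLpNorm_eq_setIntegral hu.continuous.aestronglyMeasurable
        ((subset_tsupport u).trans huE) hr).symm
    _ ≤ _ := ENNReal.toReal_mono (by finiteness) hle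
    _ = (1 + r) * volume.real E ^ (1 / r) *
          ∑ i, (∫ x in E, ‖D i x‖ ^ p i) ^ (1 / p i) := by
      simp only [ENNReal.toReal_mul, ENNReal.toReal_ofReal (add_pos one_pos hr).le,
        ← ENNReal.toReal_rpow, Measure.real, ENNReal.toReal_sum fun i _ => hDtop i,
        fun i => toReal_eLpNorm_eq_setIntegral (μ := volume)
          (hDcont i).aestronglyMeasurable (hDsupp i) (hp i)]

end EuclideanSpace

/-- Sobolev–Troisi inequality, case `p̄ = n`: for every `1 ≤ r < ∞` and `u ∈ C_c^∞(E)`,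
`‖u‖_{L^r(E)} ≤ γ₁ [ Σᵢ ‖∂ᵢu‖_{L^{pᵢ}(E)} + ‖u‖_{L¹(E)} ]`. -/
theorem sobolev_troisi_critical (n : ℕ) (hn : 1 ≤ n) (p : Fin n → ℝ)
    (hp : ∀ i, 1 ≤ p i) (pbar : ℝ)
    (hpbar : 1 / pbar = (1 / n) * ∑ i, 1 / p i) (hpn : pbar = n)
    (E : Set (EuclideanSpace ℝ (Fin n))) (hEo : IsOpen E) (hEb : Bornology.IsBounded E)
    (r : ℝ) (hr : 1 ≤ r) :
    ∃ γ₁ > (0 : ℝ),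
      ∀ u : EuclideanSpace ℝ (Fin n) → ℝ,
        ContDiff ℝ (⊤ : ℕ∞) u → HasCompactSupport u → tsupport u ⊆ E →
        (∫ x in E, |u x| ^ r) ^ (1 / r) ≤
          γ₁ * ((∑ i, (∫ x in E, |fderiv ℝ u x (EuclideanSpace.single i 1)| ^ p i) ^ (1 / p i))
            + ∫ x in E, |u x|) := by
  have hsum : ∑ i, (p i)⁻¹ = 1 := by
    rw [hpn] at hpbar
    field_simp at hpbar
    simpa using hpbar.symm
  refine ⟨(1 + r) * volume.real E ^ (1 / r) + 1, by positivity, fun u hu h2u huE =>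
    (sobolev_troisi_critical_general (fun i => one_pos.trans_le (hp i)) hsum
      hEb.measure_lt_top.ne (one_pos.trans_le hr) (hu.of_le (by simp)) h2u huE).trans ?_⟩
  gcongr
  · exact le_add_of_nonneg_right zero_le_one
  · exact le_add_of_nonneg_right (integral_nonneg fun x => abs_nonneg (u x))
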